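/- There exist universal constants C₀ ≥ 1 such that the following holds for every C ≥ C₀. Let M* ∈ ℝ^{n×n} be a symmetric matrix with max_{i,j} |M*_{i,j}| ≤ μ r σ*₁ / n, where μ ≥ 1, r ≥ 1, σ*₁ ≥ σ*_r > 0, and κ* = σ*₁/σ*_r. Let W ∈ ℝ^{n×n} be a symmetric matrix with nonnegative entries whose every row has ℓ₁-norm at most n. Set α² = C μ r σ*₁ / n and λ = C² n/(μ r κ*), and define f : ℝ^{n×r} → ℝ by f(U) = (1/2)·Σ_{i,j} W_{i,j}((UUᵀ − M*)_{i,j})² + λ Σ_{i=1}^n (‖U_i‖₂ − α)₊⁴. Then every U ∈ ℝ^{n×r} at which the Fréchet derivative of f vanishes satisfies max_{1≤i≤n} ‖U_i‖₂² ≤ 4C · μ² r² κ* σ*₁ / n. -/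

import Mathlib

open scoped BigOperators
open Matrix

attribute [local instance] Matrix.normedAddCommGroup Matrix.normedSpace

/-- Euclidean norm of the `i`-th row of a matrix. -/
noncomputable def rowNorm {m n : ℕ} (A : Matrix (Fin m) (Fin n) ℝ) (i : Fin m) : ℝ :=
  Real.sqrt (∑ j, (A i j) ^ 2)

/-!
At a critical point `U` the derivative of the objective vanishes in the direction that rescales the
`i`-th row `Uᵢ` and fixes all the others. Since `x (x - m) ≥ - m² / 4` for all real `x`, the data
term contributes at least `- n B² / 2` to this derivative, where `B` bounds the entries of `M`,
while the penalty contributes `4 λ (‖Uᵢ‖ - α)₊³ ‖Uᵢ‖`. Hence `8 λ (‖Uᵢ‖ - α)₊³ ‖Uᵢ‖ ≤ n B²`. If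
`‖Uᵢ‖ ≥ 2 α`, the left-hand side is at least `λ ‖Uᵢ‖⁴`, so `‖Uᵢ‖` cannot be large.
-/

theorem neg_sq_mul_le_mul_residual_mul {w x y B : ℝ} (hw : 0 ≤ w) (hy : |y| ≤ B) :
    -(B ^ 2 / 4) * w ≤ w * ((x - y) * x) := by
  have hyB : y ^ 2 ≤ B ^ 2 := sq_le_sq' (abs_le.1 hy).1 (abs_le.1 hy).2
  rw [mul_comm]
  refine mul_le_mul_of_nonneg_left ?_ hw
  linarith [sq_nonneg (x - y / 2)]

theorem sq_le_of_max_sub_zero_pow_mul_le {x α C K B : ℝ} (hx : 0 ≤ x) (hC : 1 ≤ C) (hK : 1 ≤ K)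
    (hB : 0 ≤ B) (hα : α ^ 2 = C * B)
    (h : 8 * C ^ 2 * (max (x - α) 0 ^ 3 * x) ≤ K * B ^ 2) : x ^ 2 ≤ 4 * C * K * B := by
  by_contra! hlt
  have two_mul_le : 2 * α ≤ x := by
    refine le_of_sq_le_sq ?_ hx
    calc (2 * α) ^ 2 = 4 * C * 1 * B := by rw [mul_pow, hα]; ring
      _ ≤ 4 * C * K * B := by gcongr
      _ ≤ x ^ 2 := hlt.le
  have half_le : x / 2 ≤ max (x - α) 0 := le_max_of_le_left (by linarith)
  refine hlt.not_ge (le_of_sq_le_sq ?_ (by positivity))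
  calc (x ^ 2) ^ 2 ≤ C ^ 2 * (x ^ 2) ^ 2 := le_mul_of_one_le_left (by positivity) (one_le_pow₀ hC)
    _ = 8 * C ^ 2 * ((x / 2) ^ 3 * x) := by ring
    _ ≤ 8 * C ^ 2 * (max (x - α) 0 ^ 3 * x) := by gcongr
    _ ≤ K * B ^ 2 := h
    _ ≤ (16 * C ^ 2 * K) * (K * B ^ 2) := by
      refine le_mul_of_one_le_left (by positivity) ?_
      linarith [one_le_mul_of_one_le_of_one_le (one_le_pow₀ hC : 1 ≤ C ^ 2) hK]
    _ = (4 * C * K * B) ^ 2 := by ring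

theorem hasDerivAt_one_add_mul_const {𝕜 : Type*} [NontriviallyNormedField 𝕜] (c x : 𝕜) :
    HasDerivAt (fun t : 𝕜 ↦ 1 + t * c) c x :=
  (hasDerivAt_mul_const c).const_add 1

theorem hasDerivAt_max_zero_pow (n : ℕ) (x : ℝ) :
    HasDerivAt (fun y : ℝ ↦ max y 0 ^ (n + 2)) ((n + 2) * max x 0 ^ (n + 1)) x := by
  have hasDerivAt_pow_add_two : HasDerivAt (fun y : ℝ ↦ y ^ (n + 2)) ((n + 2) * x ^ (n + 1)) x := by
    simpa using hasDerivAt_pow (n + 2) x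
  rcases lt_trichotomy x 0 with hx | rfl | hx
  · rw [max_eq_right hx.le, zero_pow n.succ_ne_zero, mul_zero]
    refine (hasDerivAt_const x (0 : ℝ)).congr_of_eventuallyEq ?_
    filter_upwards [Iio_mem_nhds hx] with y hy
    rw [max_eq_right (le_of_lt hy), zero_pow (n + 1).succ_ne_zero]
  · have left : HasDerivWithinAt (fun y : ℝ ↦ max y 0 ^ (n + 2)) 0 (Set.Iic 0) 0 :=
      (hasDerivWithinAt_const 0 _ 0).congr (fun y hy ↦ by simp [max_eq_right (Set.mem_Iic.1 hy)])
        (by simp)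
    have right : HasDerivWithinAt (fun y : ℝ ↦ max y 0 ^ (n + 2)) 0 (Set.Ici 0) 0 :=
      (by simpa using hasDerivAt_pow_add_two.hasDerivWithinAt :
        HasDerivWithinAt (fun y : ℝ ↦ y ^ (n + 2)) 0 (Set.Ici 0) 0).congr
        (fun y hy ↦ by rw [max_eq_left (Set.mem_Ici.1 hy)]) (by simp)
    simpa [Set.Iic_union_Ici] using left.union right
  · rw [max_eq_left hx.le]
    refine hasDerivAt_pow_add_two.congr_of_eventuallyEq ?_
    filter_upwards [Ioi_mem_nhds hx] with y hy
    rw [max_eq_left (le_of_lt hy)]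

theorem add_smul_diagonal_mul {ι κ R : Type*} [Fintype ι] [DecidableEq ι] [Semiring R]
    (U : Matrix ι κ R) (d : ι → R) (t : R) :
    U + t • (diagonal d * U) = diagonal (1 + t • d) * U := by
  ext i j
  simp only [Matrix.add_apply, Matrix.smul_apply, diagonal_mul, Pi.add_apply, Pi.one_apply,
    Pi.smul_apply, smul_eq_mul, add_mul, one_mul, mul_assoc]

theorem differentiable_matrix_elem {ι κ : Type*} [Finite ι] [Finite κ] (i : ι) (j : κ) :
    Differentiable ℝ fun A : Matrix ι κ ℝ ↦ A i j :=
  have := Fintype.ofFinite ι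
  have := Fintype.ofFinite κ
  (by fun_prop : Differentiable ℝ fun A : ι → κ → ℝ ↦ A i j)

theorem sum_sum_mul_single_add_single {ι R : Type*} [Fintype ι] [DecidableEq ι] [NonAssocSemiring R]
    (F : ι → ι → R) (i : ι) :
    ∑ a, ∑ b, F a b * ((Pi.single i 1 : ι → R) a + (Pi.single i 1 : ι → R) b) =
      ∑ j, (F i j + F j i) := by
  simp only [mul_add, Finset.sum_add_distrib, Pi.single_apply, mul_ite, mul_one, mul_zero,
    Finset.sum_ite_irrel, Finset.sum_const_zero, Finset.sum_ite_eq', Finset.mem_univ, if_true]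

theorem sum_add_swap_le_of_isSymm {ι : Type*} [Fintype ι] {W : Matrix ι ι ℝ} (hW : W.IsSymm)
    {i : ι} {D : ℝ} (hWi : ∑ j, |W i j| ≤ D) : ∑ j, (W i j + W j i) ≤ 2 * D := by
  have row_sum_le : ∑ j, W i j ≤ D := (Finset.sum_le_sum fun j _ ↦ le_abs_self _).trans hWi
  simp only [hW.apply, ← two_mul, ← Finset.mul_sum]
  linarith

section RowNorm

variable {m n : ℕ}

theorem rowNorm_nonneg (A : Matrix (Fin m) (Fin n) ℝ) (i : Fin m) : 0 ≤ rowNorm A i :=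
  Real.sqrt_nonneg _

theorem rowNorm_diagonal_mul (d : Fin m → ℝ) (A : Matrix (Fin m) (Fin n) ℝ) (i : Fin m) :
    rowNorm (diagonal d * A) i = |d i| * rowNorm A i := by
  simp only [rowNorm, diagonal_mul, mul_pow, ← Finset.mul_sum]
  rw [Real.sqrt_mul (sq_nonneg _), Real.sqrt_sq_eq_abs]

theorem continuous_rowNorm (i : Fin m) :
    Continuous fun A : Matrix (Fin m) (Fin n) ℝ ↦ rowNorm A i :=
  Real.continuous_sqrt.comp
    (continuous_finsetSum _ fun j _ ↦ (continuous_id.matrix_elem i j).pow 2)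

theorem differentiableAt_rowNorm {A : Matrix (Fin m) (Fin n) ℝ} {i : Fin m}
    (hA : rowNorm A i ≠ 0) :
    DifferentiableAt ℝ (fun B : Matrix (Fin m) (Fin n) ℝ ↦ rowNorm B i) A := by
  refine DifferentiableAt.sqrt
    (DifferentiableAt.fun_sum fun j _ ↦ (differentiable_matrix_elem i j A).pow 2) fun h ↦ hA ?_
  rw [rowNorm, h, Real.sqrt_zero]

end RowNorm

section WeightedLoss

variable {ι κ : Type*} [Fintype ι] [Fintype κ]

/-- The data term of weighted symmetric matrix completion: the squared distance from `U * Uᵀ` to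
the target `M`, each entry being weighted by the corresponding entry of `W`, without the factor
`1 / 2`. -/
def weightedLoss (W M : Matrix ι ι ℝ) (U : Matrix ι κ ℝ) : ℝ :=
  ∑ i, ∑ j, W i j * ((U * Uᵀ - M) i j) ^ 2

theorem differentiable_weightedLoss (W M : Matrix ι ι ℝ) :
    Differentiable ℝ (weightedLoss W M : Matrix ι κ ℝ → ℝ) := by
  have differentiable_residual (i j : ι) :
      Differentiable ℝ fun U : Matrix ι κ ℝ ↦ (U * Uᵀ - M) i j :=
    (Differentiable.fun_sum fun k _ ↦
      (differentiable_matrix_elem i k).mul (differentiable_matrix_elem j k)).sub_const _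
  exact Differentiable.fun_sum fun i _ ↦ Differentiable.fun_sum fun j _ ↦
    ((differentiable_residual i j).pow 2).const_mul _

theorem hasLineDerivAt_weightedLoss [DecidableEq ι] (W M : Matrix ι ι ℝ) (U : Matrix ι κ ℝ)
    (d : ι → ℝ) :
    HasLineDerivAt ℝ (weightedLoss W M)
      (2 * ∑ i, ∑ j, W i j * ((U * Uᵀ - M) i j * (U * Uᵀ) i j) * (d i + d j))
      U (diagonal d * U) := by
  simp only [Finset.mul_sum]
  refine HasDerivAt.fun_sum fun i _ ↦ HasDerivAt.fun_sum fun j _ ↦ ?_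
  have residual_apply (t : ℝ) :
      ((U + t • (diagonal d * U)) * (U + t • (diagonal d * U))ᵀ - M) i j =
        (1 + t * d i) * ((1 + t * d j) * (U * Uᵀ) i j) - M i j := by
    rw [add_smul_diagonal_mul, transpose_mul, diagonal_transpose, Matrix.mul_assoc,
      ← Matrix.mul_assoc U, Matrix.sub_apply, diagonal_mul, mul_diagonal, mul_comm ((U * Uᵀ) i j)]
    rfl
  simp only [residual_apply]
  refine (((((hasDerivAt_one_add_mul_const (d i) 0).fun_mul
    ((hasDerivAt_one_add_mul_const (d j) 0).mul_const _)).sub_const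
      (M i j)).fun_pow 2).const_mul _).congr_deriv ?_
  simp only [Matrix.sub_apply]
  ring

end WeightedLoss

section RowPenalty

variable {m n : ℕ}

/-- The regularizer of matrix completion, which penalizes the rows of norm larger than `α`. -/
noncomputable def rowPenalty (α : ℝ) (U : Matrix (Fin m) (Fin n) ℝ) : ℝ :=
  ∑ i, (max (rowNorm U i - α) 0) ^ 4

theorem differentiable_rowPenalty {α : ℝ} (hα : 0 < α) :
    Differentiable ℝ (rowPenalty α : Matrix (Fin m) (Fin n) ℝ → ℝ) := by
  refine Differentiable.fun_sum fun i _ U ↦ ?_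
  by_cases hU : rowNorm U i = 0
  · have rowNorm_lt : ∀ᶠ V in nhds U, rowNorm V i < α :=
      (continuous_rowNorm i).continuousAt.eventually_lt_const (hU.trans_lt hα)
    refine (differentiableAt_const (0 : ℝ)).congr_of_eventuallyEq ?_
    filter_upwards [rowNorm_lt] with V hV
    rw [max_eq_right (sub_nonpos.2 hV.le), zero_pow four_ne_zero]
  · exact (hasDerivAt_max_zero_pow 2 _).differentiableAt.comp U
      ((differentiableAt_rowNorm hU).sub_const α)

theorem hasLineDerivAt_rowPenalty (α : ℝ) (U : Matrix (Fin m) (Fin n) ℝ) (d : Fin m → ℝ) :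
    HasLineDerivAt ℝ (rowPenalty α)
      (∑ i, 4 * max (rowNorm U i - α) 0 ^ 3 * (d i * rowNorm U i)) U (diagonal d * U) := by
  refine HasDerivAt.fun_sum fun i _ ↦ ?_
  have hasDerivAt_abs_scale : HasDerivAt (fun t : ℝ ↦ |1 + t * d i|) (d i) 0 := by
    refine (HasDerivAt.comp (0 : ℝ) (hasDerivAt_abs_pos ?_)
      (hasDerivAt_one_add_mul_const (d i) 0)).congr_deriv (one_mul _)
    simp
  have hasDerivAt_rowNorm :
      HasDerivAt (fun t : ℝ ↦ rowNorm (U + t • (diagonal d * U)) i - α) (d i * rowNorm U i) 0 := by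
    simpa [add_smul_diagonal_mul, rowNorm_diagonal_mul] using
      (hasDerivAt_abs_scale.mul_const (rowNorm U i)).sub_const α
  refine ((hasDerivAt_max_zero_pow 2 _).comp (0 : ℝ) hasDerivAt_rowNorm).congr_deriv ?_
  norm_num

end RowPenalty

section RegularizedLoss

variable {n r : ℕ}

/-- The objective of regularized weighted symmetric matrix completion, with penalty strength `lam`
and row-norm threshold `α`. -/
noncomputable def regularizedLoss (W M : Matrix (Fin n) (Fin n) ℝ) (α lam : ℝ)
    (U : Matrix (Fin n) (Fin r) ℝ) : ℝ :=
  (1 / 2) * weightedLoss W M U + lam * rowPenalty α U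

theorem differentiable_regularizedLoss (W M : Matrix (Fin n) (Fin n) ℝ) {α : ℝ} (hα : 0 < α)
    (lam : ℝ) : Differentiable ℝ (regularizedLoss W M α lam : Matrix (Fin n) (Fin r) ℝ → ℝ) :=
  ((differentiable_weightedLoss W M).const_mul _).add ((differentiable_rowPenalty hα).const_mul _)

theorem hasLineDerivAt_regularizedLoss (W M : Matrix (Fin n) (Fin n) ℝ) (α lam : ℝ)
    (U : Matrix (Fin n) (Fin r) ℝ) (d : Fin n → ℝ) :
    HasLineDerivAt ℝ (regularizedLoss W M α lam)
      (∑ i, ∑ j, W i j * ((U * Uᵀ - M) i j * (U * Uᵀ) i j) * (d i + d j) +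
        lam * ∑ i, 4 * max (rowNorm U i - α) 0 ^ 3 * (d i * rowNorm U i))
      U (diagonal d * U) :=
  ((HasDerivAt.const_mul _ (hasLineDerivAt_weightedLoss W M U d)).add
    (HasDerivAt.const_mul _ (hasLineDerivAt_rowPenalty α U d))).congr_deriv (by ring)

theorem sum_residual_add_penalty_eq_zero_of_fderiv_eq_zero {W M : Matrix (Fin n) (Fin n) ℝ}
    {α lam : ℝ} (hα : 0 < α) {U : Matrix (Fin n) (Fin r) ℝ}
    (hU : fderiv ℝ (regularizedLoss W M α lam) U = 0) (i : Fin n) :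
    ∑ j, (W i j * ((U * Uᵀ - M) i j * (U * Uᵀ) i j) + W j i * ((U * Uᵀ - M) j i * (U * Uᵀ) j i)) +
      4 * lam * (max (rowNorm U i - α) 0 ^ 3 * rowNorm U i) = 0 := by
  -- `fderiv` also takes the value `0` where there is no derivative, so differentiability matters.
  have hasFDerivAt_zero : HasFDerivAt (regularizedLoss W M α lam) 0 U :=
    hU ▸ (differentiable_regularizedLoss W M hα lam U).hasFDerivAt
  have lineDeriv_eq_zero : _ = (0 : ℝ) :=
    (hasLineDerivAt_regularizedLoss W M α lam U (Pi.single i 1)).unique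
      (hasFDerivAt_zero.hasLineDerivAt _)
  rw [sum_sum_mul_single_add_single] at lineDeriv_eq_zero
  simpa [Pi.single_apply, mul_assoc, mul_left_comm] using lineDeriv_eq_zero

theorem penalty_le_of_fderiv_eq_zero {W M : Matrix (Fin n) (Fin n) ℝ} {B D α lam : ℝ}
    (hα : 0 < α) (hM : ∀ i j, |M i j| ≤ B) (hW : ∀ i j, 0 ≤ W i j) {U : Matrix (Fin n) (Fin r) ℝ}
    (hU : fderiv ℝ (regularizedLoss W M α lam) U = 0) {i : Fin n}
    (hWi : ∑ j, (W i j + W j i) ≤ 2 * D) :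
    8 * lam * (max (rowNorm U i - α) 0 ^ 3 * rowNorm U i) ≤ D * B ^ 2 := by
  have residual_ge : -(B ^ 2 / 4) * ∑ j, (W i j + W j i) ≤
      ∑ j, (W i j * ((U * Uᵀ - M) i j * (U * Uᵀ) i j) +
        W j i * ((U * Uᵀ - M) j i * (U * Uᵀ) j i)) := by
    rw [Finset.mul_sum]
    refine Finset.sum_le_sum fun j _ ↦ ?_
    rw [mul_add]
    exact add_le_add (neg_sq_mul_le_mul_residual_mul (hW i j) (hM i j))
      (neg_sq_mul_le_mul_residual_mul (hW j i) (hM j i))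
  have weight_le := mul_le_mul_of_nonneg_left hWi (sq_nonneg B)
  linarith [sum_residual_add_penalty_eq_zero_of_fderiv_eq_zero hα hU i]

end RegularizedLoss

theorem stmt9_general {C : ℝ} (hC : 1 ≤ C) {n r : ℕ} (hr : 0 < r) {μ σ₁ σᵣ : ℝ} (hμ : 1 ≤ μ)
    (hσ : σᵣ ≤ σ₁) (hσᵣ : 0 < σᵣ) {M W : Matrix (Fin n) (Fin n) ℝ}
    (hM : ∀ i j, |M i j| ≤ μ * r * σ₁ / n) (hW : ∀ i j, 0 ≤ W i j)
    (hWsum : ∀ i, ∑ j, (W i j + W j i) ≤ 2 * n) {κ α lam : ℝ} (hκ : κ = σ₁ / σᵣ)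
    (hα : α = √(C * μ * r * σ₁ / n)) (hlam : lam = C ^ 2 * n / (μ * r * κ))
    {U : Matrix (Fin n) (Fin r) ℝ} (hU : fderiv ℝ (regularizedLoss W M α lam) U = 0) (i : Fin n) :
    rowNorm U i ^ 2 ≤ 4 * C * μ ^ 2 * r ^ 2 * κ * σ₁ / n := by
  have hn : (0 : ℝ) < n := Nat.cast_pos.2 i.pos
  have hr_one : (1 : ℝ) ≤ r := Nat.one_le_cast.2 hr
  have hσ₁ : 0 < σ₁ := hσᵣ.trans_le hσ
  have hκ_one : 1 ≤ κ := hκ ▸ (one_le_div hσᵣ).2 hσ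
  have hK : 1 ≤ μ * r * κ :=
    one_le_mul_of_one_le_of_one_le (one_le_mul_of_one_le_of_one_le hμ hr_one) hκ_one
  have hα_pos : 0 < α := hα ▸ Real.sqrt_pos.2 (by positivity)
  have hα_sq : α ^ 2 = C * (μ * r * σ₁ / n) := by
    rw [hα, Real.sq_sqrt (by positivity)]
    ring
  have penalty_le := penalty_le_of_fderiv_eq_zero hα_pos hM hW hU (hWsum i)
  have scaled_penalty_le :
      8 * C ^ 2 * (max (rowNorm U i - α) 0 ^ 3 * rowNorm U i) ≤
        μ * r * κ * (μ * r * σ₁ / n) ^ 2 :=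
    calc 8 * C ^ 2 * (max (rowNorm U i - α) 0 ^ 3 * rowNorm U i)
        = μ * r * κ / n * (8 * lam * (max (rowNorm U i - α) 0 ^ 3 * rowNorm U i)) := by
          rw [hlam]; field_simp
      _ ≤ μ * r * κ / n * (n * (μ * r * σ₁ / n) ^ 2) := by gcongr
      _ = μ * r * κ * (μ * r * σ₁ / n) ^ 2 := by field_simp
  calc rowNorm U i ^ 2 ≤ 4 * C * (μ * r * κ) * (μ * r * σ₁ / n) :=
        sq_le_of_max_sub_zero_pow_mul_le (rowNorm_nonneg U i) hC hK (by positivity) hα_sq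
          scaled_penalty_le
    _ = 4 * C * μ ^ 2 * r ^ 2 * κ * σ₁ / n := by ring

/-- Critical points of the regularized symmetric matrix-completion
objective have rows of bounded norm. -/
theorem stmt9 :
    ∃ C₀ : ℝ, 1 ≤ C₀ ∧
      ∀ C : ℝ, C₀ ≤ C →
      ∀ (n r : ℕ), 0 < n → 0 < r →
      ∀ (μ σ₁ σᵣ : ℝ), 1 ≤ μ → σᵣ ≤ σ₁ → 0 < σᵣ →
      ∀ M : Matrix (Fin n) (Fin n) ℝ, Mᵀ = M →
      (∀ i j, |M i j| ≤ μ * r * σ₁ / n) →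
      ∀ W : Matrix (Fin n) (Fin n) ℝ, Wᵀ = W →
      (∀ i j, 0 ≤ W i j) →
      (∀ i, ∑ j, |W i j| ≤ n) →
      ∀ κ α lam : ℝ, κ = σ₁ / σᵣ →
        α = Real.sqrt (C * μ * r * σ₁ / n) →
        lam = C ^ 2 * n / (μ * r * κ) →
      ∀ f : Matrix (Fin n) (Fin r) ℝ → ℝ,
        (f = fun U => (1 / 2) * (∑ i, ∑ j, W i j * ((U * Uᵀ - M) i j) ^ 2) +
          lam * ∑ i, (max (rowNorm U i - α) 0) ^ 4) →
      ∀ U : Matrix (Fin n) (Fin r) ℝ,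
        fderiv ℝ f U = 0 →
        ∀ i, (rowNorm U i) ^ 2 ≤ 4 * C * μ ^ 2 * r ^ 2 * κ * σ₁ / n := by
  refine ⟨1, le_rfl, ?_⟩
  rintro C hC n r - hr μ σ₁ σᵣ hμ hσ hσᵣ M - hM W hWsymm hW hWsum κ α lam hκ hα hlam _ rfl U hU
  exact stmt9_general hC hr hμ hσ hσᵣ hM hW
    (fun i ↦ sum_add_swap_le_of_isSymm hWsymm (hWsum i)) hκ hα hlam hU
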